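/- Under assumptions (I1)–(I4), let λ ∈ (λ_n, λ_{n+1}). For every ũ ∈ E∖E_n there exists a unique u ∈ F_n(ũ)⁺ maximizing J_λ over F_n(ũ)⁺, and this maximizer u belongs to NP_λ. Consequently, inf_{u ∈ NP_λ} J_λ(u) = inf_{ũ ∈ E∖E_n} sup_{w ∈ F_n(ũ)⁺} J_λ(w). -/

import Mathlib

open Filter Topology Set
open scoped InnerProductSpace

/- Abstract setting: `E = D(A^{1/2})` is a real Hilbert space in which the rescaled
eigenfunctions `ζ_k / √(1+λ_k)` form a Hilbert basis (encoded by `hON` and `hdense` below);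
the `H`-inner product of `u, v ∈ E` is recovered as `∑ₖ ⟨u,ζ_k⟩_H ⟨v,ζ_k⟩_H`, where
`⟨u,ζ_k⟩_H = ⟨u,ζ_k⟩_E / (1+λ_k)`. -/

variable {E : Type*} [NormedAddCommGroup E] [InnerProductSpace ℝ E] [CompleteSpace E]

/-- The `H`-inner-product coefficient `⟨u, ζ_k⟩_H = ⟨u, ζ_k⟩_E / (1 + λ_k)`. -/
noncomputable def coefH (lam : ℕ → ℝ) (ζ : ℕ → E) (u : E) (k : ℕ) : ℝ :=
  ⟪u, ζ k⟫_ℝ / (1 + lam k)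

/-- The square of the `H`-norm: `‖u‖_H² = ∑ₖ ⟨u,ζ_k⟩_H²`. -/
noncomputable def normHsq (lam : ℕ → ℝ) (ζ : ℕ → E) (u : E) : ℝ :=
  ∑' k, (coefH lam ζ u k) ^ 2

/-- The symmetric bilinear form `q_λ(u,v) = ∑ₖ (λ_k − λ) ⟨u,ζ_k⟩_H ⟨v,ζ_k⟩_H`. -/
noncomputable def qForm (lam : ℕ → ℝ) (ζ : ℕ → E) (lambda : ℝ) (u v : E) : ℝ :=
  ∑' k, (lam k - lambda) * (coefH lam ζ u k * coefH lam ζ v k)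

/-- The action functional `J_λ(u) = ½ q_λ(u) − I(u)`. -/
noncomputable def Jfun (lam : ℕ → ℝ) (ζ : ℕ → E) (I : E → ℝ) (lambda : ℝ) (u : E) : ℝ :=
  qForm lam ζ lambda u u / 2 - I u

/-- `E_n`, the span of the eigenfunctions `ζ_0, …, ζ_n` (the first `n+1` of them). -/
noncomputable def Esub (ζ : ℕ → E) (n : ℕ) : Submodule ℝ E :=
  Submodule.span ℝ (ζ '' {k : ℕ | k ≤ n})

/-- `F_n(u) = E_n ⊕ ℝ u`. -/
noncomputable def Fsub (ζ : ℕ → E) (n : ℕ) (u : E) : Submodule ℝ E :=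
  Esub ζ n ⊔ Submodule.span ℝ {u}

/-- `F_n(u)⁺ = E_n ⊕ ℝ⁺ u = {v + t u : v ∈ E_n, t > 0}`. -/
def FsubPlus (ζ : ℕ → E) (n : ℕ) (u : E) : Set E :=
  {w | ∃ v ∈ Esub ζ n, ∃ t : ℝ, 0 < t ∧ w = v + t • u}

/-- The derivative of `J_λ` at `u` applied to `w`: `J_λ'(u)[w] = q_λ(u,w) − I'(u)[w]`. -/
noncomputable def Jderiv (lam : ℕ → ℝ) (ζ : ℕ → E) (I' : E → E →L[ℝ] ℝ)
    (lambda : ℝ) (u w : E) : ℝ :=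
  qForm lam ζ lambda u w - I' u w

/-- The Nehari–Pankov set `NP_λ = {u ∈ E ∖ E_n : J_λ'(u)|_{F_n(u)} = 0}`. -/
def NehariPankov (lam : ℕ → ℝ) (ζ : ℕ → E) (I' : E → E →L[ℝ] ℝ)
    (n : ℕ) (lambda : ℝ) : Set E :=
  {u | u ∉ Esub ζ n ∧ ∀ w ∈ Fsub ζ n u, Jderiv lam ζ I' lambda u w = 0}

/-- The ground-state level `c_λ = inf_{NP_λ} J_λ`. -/
noncomputable def clevel (lam : ℕ → ℝ) (ζ : ℕ → E) (I : E → ℝ) (I' : E → E →L[ℝ] ℝ)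
    (n : ℕ) (lambda : ℝ) : ℝ :=
  sInf (Jfun lam ζ I lambda '' NehariPankov lam ζ I' n lambda)

/-- The set `Q_λ` of minimizers of `J_λ` on `NP_λ`. -/
def Qset (lam : ℕ → ℝ) (ζ : ℕ → E) (I : E → ℝ) (I' : E → E →L[ℝ] ℝ)
    (n : ℕ) (lambda : ℝ) : Set E :=
  {u | u ∈ NehariPankov lam ζ I' n lambda ∧
    Jfun lam ζ I lambda u = clevel lam ζ I I' n lambda}

/-- `E_n^⊥ = {w ∈ E : ⟨w, ζ_k⟩_H = 0 for k = 0, …, n}`. -/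
def EsubPerp (lam : ℕ → ℝ) (ζ : ℕ → E) (n : ℕ) : Set E :=
  {w | ∀ k ≤ n, coefH lam ζ w k = 0}

/- Along every ray, `I` is convex as a function of `t²`; this is what (I4) says for `v = 0`, and it
makes `I(tu)/t²` nondecreasing. By compactness of the unit sphere, `J_λ` is then negative at
infinity on the finite-dimensional space `F_n(ũ)`. It is nonpositive on `E_n`, where `q_λ` is
negative definite, and positive somewhere on `F_n(ũ)⁺`, where `q_λ` takes positive values and
dominates `I` near `0`. So the maximum over the closed half-space is attained in its interior, where
the derivative along `F_n(ũ)` vanishes. Conversely (I4) makes every point `u` of the Nehari–Pankov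
set the strict maximizer over `F_n(u)⁺`, and `F_n(u)⁺ = F_n(ũ)⁺` for `u ∈ F_n(ũ)⁺`. -/

section HalfSpace

variable {X : Type*} [AddCommGroup X] [Module ℝ X] {V : Submodule ℝ X} {a u w : X}

/-- The open half-space `V ⊕ ℝ⁺ a` of `V ⊕ ℝ a`; it degenerates to `V` when `a ∈ V`. -/
def halfSpace (V : Submodule ℝ X) (a : X) : Set X :=
  {w | ∃ v ∈ V, ∃ t : ℝ, 0 < t ∧ w = v + t • a}

theorem self_mem_halfSpace (V : Submodule ℝ X) (a : X) : a ∈ halfSpace V a :=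
  ⟨0, V.zero_mem, 1, one_pos, by simp⟩

theorem smul_mem_halfSpace {t : ℝ} (ht : 0 < t) (hw : w ∈ halfSpace V a) :
    t • w ∈ halfSpace V a := by
  obtain ⟨v, hv, r, hr, rfl⟩ := hw
  exact ⟨t • v, V.smul_mem t hv, t * r, mul_pos ht hr, by module⟩

theorem halfSpace_subset_of_mem (hu : u ∈ halfSpace V a) : halfSpace V u ⊆ halfSpace V a := by
  obtain ⟨v, hv, t, ht, rfl⟩ := hu
  rintro _ ⟨y, hy, r, hr, rfl⟩
  exact ⟨y + r • v, V.add_mem hy (V.smul_mem r hv), r * t, mul_pos hr ht, by module⟩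

theorem mem_halfSpace_symm (hu : u ∈ halfSpace V a) : a ∈ halfSpace V u := by
  obtain ⟨v, hv, t, ht, rfl⟩ := hu
  refine ⟨-(t⁻¹ • v), V.neg_mem (V.smul_mem _ hv), t⁻¹, inv_pos.2 ht, ?_⟩
  rw [smul_add, inv_smul_smul₀ ht.ne', neg_add_cancel_left]

theorem halfSpace_eq_of_mem (hu : u ∈ halfSpace V a) : halfSpace V u = halfSpace V a :=
  (halfSpace_subset_of_mem hu).antisymm (halfSpace_subset_of_mem (mem_halfSpace_symm hu))

theorem notMem_of_mem_halfSpace (ha : a ∉ V) (hu : u ∈ halfSpace V a) : u ∉ V := by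
  obtain ⟨v, hv, t, ht, rfl⟩ := hu
  rwa [V.add_mem_iff_right hv, V.smul_mem_iff ht.ne']

theorem mem_halfSpace_iff_pos {ℓ : Module.Dual ℝ X} (hV : V ≤ LinearMap.ker ℓ) (ha : ℓ a = 1) :
    w ∈ halfSpace V a ↔ w ∈ V ⊔ Submodule.span ℝ {a} ∧ 0 < ℓ w := by
  simp only [halfSpace, mem_ofPred_eq, Submodule.mem_sup, Submodule.mem_span_singleton]
  constructor
  · rintro ⟨v, hv, t, ht, rfl⟩
    have hv0 : ℓ v = 0 := hV hv
    exact ⟨⟨v, hv, t • a, ⟨t, rfl⟩, rfl⟩, by simpa [hv0, ha] using ht⟩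
  · rintro ⟨⟨v, hv, _, ⟨t, rfl⟩, rfl⟩, ht⟩
    have hv0 : ℓ v = 0 := hV hv
    exact ⟨v, hv, t, by simpa [hv0, ha] using ht, rfl⟩

theorem mem_of_mem_sup_span_singleton_of_apply_eq_zero {ℓ : Module.Dual ℝ X}
    (hV : V ≤ LinearMap.ker ℓ) (ha : ℓ a = 1) (hw : w ∈ V ⊔ Submodule.span ℝ {a})
    (hw0 : ℓ w = 0) : w ∈ V := by
  obtain ⟨v, hv, _, hz, rfl⟩ := Submodule.mem_sup.1 hw
  obtain ⟨t, rfl⟩ := Submodule.mem_span_singleton.1 hz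
  have hv0 : ℓ v = 0 := hV hv
  have ht : t = 0 := by simpa [hv0, ha] using hw0
  simpa [ht] using hv

theorem eventually_add_smul_mem_halfSpace (hw : w ∈ V ⊔ Submodule.span ℝ {u}) :
    ∀ᶠ r : ℝ in 𝓝 0, u + r • w ∈ halfSpace V u := by
  obtain ⟨v, hv, _, hz, rfl⟩ := Submodule.mem_sup.1 hw
  obtain ⟨c, rfl⟩ := Submodule.mem_span_singleton.1 hz
  have hlim : Tendsto (fun r : ℝ => 1 + r * c) (𝓝 0) (𝓝 1) :=
    Continuous.tendsto' (by fun_prop) 0 1 (by simp)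
  filter_upwards [hlim.eventually (lt_mem_nhds one_pos)] with r hr
  exact ⟨r • v, V.smul_mem r hv, 1 + r * c, hr, by module⟩

theorem exists_mem_orthogonal_mem_halfSpace {X : Type*} [NormedAddCommGroup X]
    [InnerProductSpace ℝ X] (V : Submodule ℝ X) [V.HasOrthogonalProjection] (a : X) :
    ∃ b ∈ Vᗮ, b ∈ halfSpace V a :=
  ⟨_, V.sub_starProjection_mem_orthogonal a, -V.starProjection a,
    V.neg_mem (V.starProjection_apply_mem a), 1, one_pos, by module⟩

theorem image_eq_image_sSup_image_halfSpace {J : X → ℝ} {N : Set X}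
    (hmax : ∀ u ∈ N, u ∉ V ∧ IsMaxOn J (halfSpace V u) u)
    (hmeet : ∀ a ∉ V, (N ∩ halfSpace V a).Nonempty) :
    J '' N = (fun a => sSup (J '' halfSpace V a)) '' {a | a ∉ V} := by
  have hsup : ∀ u ∈ N, sSup (J '' halfSpace V u) = J u := fun u hu =>
    sSup_image'.trans ((hmax u hu).2.iSup_eq (self_mem_halfSpace V u))
  apply Subset.antisymm
  · rintro _ ⟨u, hu, rfl⟩
    exact ⟨u, (hmax u hu).1, hsup u hu⟩
  · rintro _ ⟨a, ha, rfl⟩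
    obtain ⟨u, huN, hua⟩ := hmeet a ha
    exact ⟨u, huN, by simp only [← halfSpace_eq_of_mem hua, hsup u huN]⟩

end HalfSpace

section RayQuotient

variable {X : Type*} [AddCommGroup X] [Module ℝ X] {I : X → ℝ} {u : X}

theorem apply_nonneg_of_monotoneOn_div_sq
    (hmono : MonotoneOn (fun t : ℝ => I (t • u) / t ^ 2) (Ioi 0))
    (hzero : Tendsto (fun t : ℝ => I (t • u) / t ^ 2) (𝓝[>] 0) (𝓝 0)) : 0 ≤ I u := by
  refine le_of_tendsto hzero ?_
  filter_upwards [Ioc_mem_nhdsGT (one_pos : (0 : ℝ) < 1)] with t ht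
  simpa using hmono ht.1 (mem_Ioi.2 one_pos) ht.2

theorem apply_zero_eq_zero_of_tendsto_div_sq (hI : ContinuousAt (fun t : ℝ => I (t • u)) 0)
    (hzero : Tendsto (fun t : ℝ => I (t • u) / t ^ 2) (𝓝[>] 0) (𝓝 0)) : I 0 = 0 := by
  have hsq : Tendsto (fun t : ℝ => t ^ 2) (𝓝[>] 0) (𝓝 0) :=
    (Continuous.tendsto' (by fun_prop) 0 0 (by simp)).mono_left nhdsWithin_le_nhds
  have hprod : Tendsto (fun t : ℝ => I (t • u)) (𝓝[>] 0) (𝓝 0) := by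
    refine Tendsto.congr' ?_ (by simpa using hzero.mul hsq)
    filter_upwards [self_mem_nhdsWithin] with t ht
    exact div_mul_cancel₀ _ (pow_ne_zero 2 (ne_of_gt ht))
  have hlim := hI.tendsto.mono_left (nhdsWithin_le_nhds (s := Ioi 0))
  rw [zero_smul] at hlim
  exact tendsto_nhds_unique hlim hprod

theorem hasDerivAt_apply_smul {d t : ℝ} (h : HasLineDerivAt ℝ I d (t • u) u) :
    HasDerivAt (fun r : ℝ => I (r • u)) d t := by
  have hline : HasDerivAt (fun s : ℝ => I (t • u + s • u)) d (t - t) := by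
    rw [sub_self]
    exact h
  refine (hline.comp_sub_const t t).congr_of_eventuallyEq (Eventually.of_forall fun r => ?_)
  simp only [← add_smul, add_sub_cancel]

theorem monotoneOn_apply_smul_div_sq {I' : X → Module.Dual ℝ X}
    (hderiv : ∀ x, HasLineDerivAt ℝ I (I' x u) x u) (hle : ∀ x, 2 * I x ≤ I' x x) :
    MonotoneOn (fun t : ℝ => I (t • u) / t ^ 2) (Ioi 0) := by
  have hquot : ∀ t ∈ Ioi (0 : ℝ), HasDerivAt (fun t : ℝ => I (t • u) / t ^ 2)
      ((I' (t • u) (t • u) - 2 * I (t • u)) / t ^ 3) t := by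
    intro t ht
    have ht0 : t ≠ 0 := ne_of_gt ht
    refine ((hasDerivAt_apply_smul (hderiv (t • u))).div (hasDerivAt_pow 2 t)
      (pow_ne_zero 2 ht0)).congr_deriv ?_
    simp only [map_smul, smul_eq_mul]
    field_simp
    norm_num
    ring
  refine monotoneOn_of_deriv_nonneg (convex_Ioi 0)
    (fun t ht => (hquot t ht).continuousAt.continuousWithinAt) ?_ ?_ <;>
    rw [interior_Ioi]
  · exact fun t ht => (hquot t ht).differentiableAt.differentiableWithinAt
  · intro t ht
    rw [(hquot t ht).deriv]
    exact div_nonneg (sub_nonneg.2 (hle _)) (pow_nonneg (le_of_lt ht) 3)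

end RayQuotient

section Action

variable {X : Type*} [AddCommGroup X] [Module ℝ X] {Q : LinearMap.BilinForm ℝ X}
  {V : Submodule ℝ X} {I : X → ℝ} {I' : X → Module.Dual ℝ X} {a b u w : X}

/-- The action functional `u ↦ ½ Q(u, u) − I(u)` of a bilinear form `Q` and a nonlinear term `I`;
`J_λ` is the case where `Q` is the polar form of `q_λ`. -/
noncomputable def action (Q : LinearMap.BilinForm ℝ X) (I : X → ℝ) (u : X) : ℝ :=
  Q u u / 2 - I u

/-- The Nehari–Pankov set of the action functional with respect to a subspace `V`: the points
outside `V` at which the derivative of the action vanishes on `V ⊕ ℝ u`. -/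
def nehariPankovSet (Q : LinearMap.BilinForm ℝ X) (I' : X → Module.Dual ℝ X)
    (V : Submodule ℝ X) : Set X :=
  {u | u ∉ V ∧ ∀ w ∈ V ⊔ Submodule.span ℝ {u}, Q u w - I' u w = 0}

/-- Condition (I4), required for increments `v` in a subspace `V` only. -/
structure PankovInequality (I : X → ℝ) (I' : X → Module.Dual ℝ X) (V : Submodule ℝ X) : Prop where
  le : ∀ u ≠ 0, ∀ v ∈ V, ∀ s : ℝ, -1 ≤ s →
    I u - I ((1 + s) • u + v) + I' u ((s * (s / 2 + 1)) • u + (1 + s) • v) ≤ 0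
  lt : ∀ u ≠ 0, ∀ s : ℝ, -1 ≤ s → s ≠ 0 →
    I u - I ((1 + s) • u) + I' u ((s * (s / 2 + 1)) • u) < 0

theorem PankovInequality.two_mul_le (h : PankovInequality I I' V) (hI0 : I 0 = 0) (u : X) :
    2 * I u ≤ I' u u := by
  rcases eq_or_ne u 0 with rfl | hu
  · simp [hI0]
  · have hs := h.le u hu 0 V.zero_mem (-1) le_rfl
    norm_num [hI0] at hs
    linarith

theorem action_smul (Q : LinearMap.BilinForm ℝ X) (I : X → ℝ) {t : ℝ} (ht : t ≠ 0) (u : X) :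
    action Q I (t • u) = t ^ 2 * (Q u u / 2 - I (t • u) / t ^ 2) := by
  rw [mul_sub, mul_div_cancel₀ _ (pow_ne_zero 2 ht)]
  simp only [action, map_smul, LinearMap.smul_apply, smul_eq_mul]
  ring

theorem exists_pos_action_smul_pos (hb : 0 < Q b b)
    (hzero : Tendsto (fun t : ℝ => I (t • b) / t ^ 2) (𝓝[>] 0) (𝓝 0)) :
    ∃ t : ℝ, 0 < t ∧ 0 < action Q I (t • b) := by
  obtain ⟨t, hlt, ht⟩ := ((hzero.eventually_lt_const (half_pos hb)).and self_mem_nhdsWithin).exists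
  have ht : 0 < t := ht
  refine ⟨t, ht, ?_⟩
  rw [action_smul Q I ht.ne']
  exact mul_pos (pow_pos ht 2) (sub_pos.2 hlt)

theorem hasLineDerivAt_action (hQ : Q.IsSymm) {d : ℝ} (hI : HasLineDerivAt ℝ I d u w) :
    HasLineDerivAt ℝ (action Q I) (Q u w - d) u w := by
  have hexpand : ∀ r : ℝ, Q (u + r • w) (u + r • w) / 2 =
      Q u u / 2 + (r * Q u w + r ^ 2 * (Q w w / 2)) := by
    intro r
    have hsymm : Q w u = Q u w := hQ.eq w u
    simp only [map_add, map_smul, LinearMap.add_apply, LinearMap.smul_apply, smul_eq_mul, hsymm]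
    ring
  have hquad : HasDerivAt (fun r : ℝ => Q (u + r • w) (u + r • w) / 2) (Q u w) 0 := by
    simp only [hexpand]
    refine HasDerivAt.const_add _ ((((hasDerivAt_id (0 : ℝ)).mul_const (Q u w)).add
      ((hasDerivAt_pow 2 (0 : ℝ)).mul_const (Q w w / 2))).congr_deriv ?_)
    simp
  exact hquad.sub hI

theorem mem_nehariPankovSet_of_isMaxOn (hQ : Q.IsSymm)
    (hderiv : ∀ x w, HasLineDerivAt ℝ I (I' x w) x w) (ha : a ∉ V) (hu : u ∈ halfSpace V a)
    (hmax : IsMaxOn (action Q I) (halfSpace V a) u) : u ∈ nehariPankovSet Q I' V := by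
  rw [← halfSpace_eq_of_mem hu] at hmax
  exact ⟨notMem_of_mem_halfSpace ha hu, fun w hw => hmax.hasLineDerivAt_eq_zero
    (hasLineDerivAt_action hQ (hderiv u w)) (eventually_add_smul_mem_halfSpace hw)⟩

theorem action_lt_of_mem_nehariPankovSet (hQ : Q.IsSymm) (hneg : ∀ v ∈ V, v ≠ 0 → Q v v < 0)
    (hI : PankovInequality I I' V) (hu : u ∈ nehariPankovSet Q I' V) (hw : w ∈ halfSpace V u)
    (hne : w ≠ u) : action Q I w < action Q I u := by
  obtain ⟨hu, hcrit⟩ := hu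
  obtain ⟨v, hv, t, ht, rfl⟩ := hw
  obtain ⟨s, rfl⟩ : ∃ s, t = 1 + s := ⟨t - 1, by ring⟩
  have hu0 : u ≠ 0 := fun h => hu (h ▸ V.zero_mem)
  have hs : -1 ≤ s := by linarith
  -- (I4) evaluates `I'(u)` in this direction.
  have hdir : Q u ((s * (s / 2 + 1)) • u + (1 + s) • v) =
      I' u ((s * (s / 2 + 1)) • u + (1 + s) • v) :=
    sub_eq_zero.1 <| hcrit _ <| add_mem
      (Submodule.smul_mem _ _ (Submodule.mem_sup_right (Submodule.mem_span_singleton_self u)))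
      (Submodule.smul_mem _ _ (Submodule.mem_sup_left hv))
  have hgap : action Q I (v + (1 + s) • u) - action Q I u = Q v v / 2 +
      (I u - I ((1 + s) • u + v) + I' u ((s * (s / 2 + 1)) • u + (1 + s) • v)) := by
    have hsymm : Q v u = Q u v := hQ.eq v u
    rw [← hdir, add_comm v]
    simp only [action, map_add, map_smul, LinearMap.add_apply, LinearMap.smul_apply, smul_eq_mul,
      hsymm]
    ring
  rw [← sub_neg, hgap]
  rcases eq_or_ne v 0 with rfl | hv0
  · have hs0 : s ≠ 0 := by
      rintro rfl
      simp at hne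
    simpa using hI.lt u hu0 s hs hs0
  · linarith [hneg v hv hv0, hI.le u hu0 v hv s hs]

theorem isMaxOn_of_mem_nehariPankovSet (hQ : Q.IsSymm) (hneg : ∀ v ∈ V, v ≠ 0 → Q v v < 0)
    (hI : PankovInequality I I' V) (hu : u ∈ nehariPankovSet Q I' V) :
    IsMaxOn (action Q I) (halfSpace V u) u := by
  intro w hw
  rcases eq_or_ne w u with rfl | hne
  · exact le_refl (action Q I w)
  · exact (action_lt_of_mem_nehariPankovSet hQ hneg hI hu hw hne).le

theorem eq_of_isMaxOn_of_mem_nehariPankovSet (hQ : Q.IsSymm)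
    (hneg : ∀ v ∈ V, v ≠ 0 → Q v v < 0) (hI : PankovInequality I I' V)
    (hu : u ∈ nehariPankovSet Q I' V) (hua : u ∈ halfSpace V a) (hwa : w ∈ halfSpace V a)
    (hw : IsMaxOn (action Q I) (halfSpace V a) w) : w = u := by
  by_contra hne
  rw [← halfSpace_eq_of_mem hua] at hwa
  exact (action_lt_of_mem_nehariPankovSet hQ hneg hI hu hwa hne).not_ge (hw hua)

theorem existsUnique_isMaxOn_action (hQ : Q.IsSymm) (hneg : ∀ v ∈ V, v ≠ 0 → Q v v < 0)
    (hderiv : ∀ x w, HasLineDerivAt ℝ I (I' x w) x w) (hI : PankovInequality I I' V) (ha : a ∉ V)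
    (hex : ∃ u ∈ halfSpace V a, IsMaxOn (action Q I) (halfSpace V a) u) :
    ∃! u, u ∈ halfSpace V a ∧ IsMaxOn (action Q I) (halfSpace V a) u := by
  obtain ⟨u, hu, hmax⟩ := hex
  have hcrit := mem_nehariPankovSet_of_isMaxOn hQ hderiv ha hu hmax
  exact ⟨u, ⟨hu, hmax⟩, fun w hw =>
    eq_of_isMaxOn_of_mem_nehariPankovSet hQ hneg hI hcrit hu hw.1 hw.2⟩

theorem image_action_nehariPankovSet (hQ : Q.IsSymm) (hneg : ∀ v ∈ V, v ≠ 0 → Q v v < 0)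
    (hderiv : ∀ x w, HasLineDerivAt ℝ I (I' x w) x w) (hI : PankovInequality I I' V)
    (hex : ∀ a ∉ V, ∃ u ∈ halfSpace V a, IsMaxOn (action Q I) (halfSpace V a) u) :
    action Q I '' nehariPankovSet Q I' V =
      (fun a => sSup (action Q I '' halfSpace V a)) '' {a | a ∉ V} := by
  refine image_eq_image_sSup_image_halfSpace
    (fun u hu => ⟨hu.1, isMaxOn_of_mem_nehariPankovSet hQ hneg hI hu⟩) fun a ha => ?_
  obtain ⟨u, hu, hmax⟩ := hex a ha
  exact ⟨u, mem_nehariPankovSet_of_isMaxOn hQ hderiv ha hu hmax, hu⟩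

end Action

section Existence

theorem exists_pos_and_isMaxOn {X : Type*} [TopologicalSpace X] {f ℓ : X → ℝ}
    (hf : Continuous f) (hℓ : Continuous ℓ) (hzero : ∀ x, ℓ x = 0 → f x ≤ 0)
    (hinf : ∀ᶠ x in cocompact X, f x ≤ 0) {x₀ : X} (hℓ₀ : 0 < ℓ x₀) (hf₀ : 0 < f x₀) :
    ∃ u, 0 < ℓ u ∧ IsMaxOn f {x | 0 < ℓ x} u := by
  obtain ⟨u, hu, hmax⟩ := hf.continuousOn.exists_isMaxOn' (isClosed_le continuous_const hℓ)
    (mem_ofPred.2 hℓ₀.le)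
    (Eventually.filter_mono inf_le_left (hinf.mono fun x hx => hx.trans hf₀.le))
  have hfu : 0 < f u := hf₀.trans_le (hmax hℓ₀.le)
  have hℓu : ℓ u ≠ 0 := fun h => (hzero u h).not_gt hfu
  exact ⟨u, lt_of_le_of_ne hu hℓu.symm, hmax.on_subset fun x (hx : 0 < ℓ x) => hx.le⟩

variable {X : Type*} [NormedAddCommGroup X] [NormedSpace ℝ X] {Q : LinearMap.BilinForm ℝ X}
  {I : X → ℝ}

theorem continuous_bilinForm_self [FiniteDimensional ℝ X] (Q : LinearMap.BilinForm ℝ X) :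
    Continuous fun x => Q x x := by
  have hQ : Continuous (LinearMap.toContinuousLinearMap.toLinearMap ∘ₗ Q) :=
    LinearMap.continuous_of_finiteDimensional _
  exact hQ.clm_apply continuous_id

theorem eventually_atTop_forall_sphere_action_smul_neg [FiniteDimensional ℝ X]
    (hI : Continuous I)
    (hmono : ∀ u ≠ 0, MonotoneOn (fun t : ℝ => I (t • u) / t ^ 2) (Ioi 0))
    (htop : ∀ u ≠ 0, Tendsto (fun t : ℝ => I (t • u) / t ^ 2) atTop atTop) :
    ∀ᶠ t : ℝ in atTop, ∀ y ∈ Metric.sphere (0 : X) 1, action Q I (t • y) < 0 := by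
  refine (isCompact_sphere (0 : X) 1).induction_on
    (p := fun S => ∀ᶠ t : ℝ in atTop, ∀ y ∈ S, action Q I (t • y) < 0) ?_ ?_ ?_ ?_
  · simp
  · exact fun S S' hS h => h.mono fun t ht y hy => ht y (hS hy)
  · intro S S' h h'
    filter_upwards [h, h'] with t ht ht' y hy
    exact hy.elim (ht y) (ht' y)
  · intro y hy
    have hy0 : y ≠ 0 := ne_zero_of_mem_unit_sphere ⟨y, hy⟩
    obtain ⟨T, hlt, hT⟩ : ∃ T : ℝ, Q y y / 2 < I (T • y) / T ^ 2 ∧ 0 < T :=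
      (((htop y hy0).eventually_gt_atTop _).and (eventually_gt_atTop 0)).exists
    have hcont : Continuous fun z => I (T • z) / T ^ 2 :=
      (hI.comp (continuous_const_smul T)).div_const _
    have hnhds : ∀ᶠ z in 𝓝 y, z ≠ 0 ∧ Q z z / 2 < I (T • z) / T ^ 2 :=
      (isOpen_ne.eventually_mem hy0).and
        (((continuous_bilinForm_self Q).div_const 2).continuousAt.eventually_lt
          hcont.continuousAt hlt)
    refine ⟨_, mem_nhdsWithin_of_mem_nhds hnhds, ?_⟩
    filter_upwards [eventually_ge_atTop T] with t ht z ⟨hz0, hz⟩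
    have ht0 : 0 < t := hT.trans_le ht
    rw [action_smul Q I ht0.ne']
    exact mul_neg_of_pos_of_neg (pow_pos ht0 2)
      (sub_neg.2 (hz.trans_le (hmono z hz0 hT ht0 ht)))

theorem eventually_cocompact_action_neg [FiniteDimensional ℝ X] (hI : Continuous I)
    (hmono : ∀ u ≠ 0, MonotoneOn (fun t : ℝ => I (t • u) / t ^ 2) (Ioi 0))
    (htop : ∀ u ≠ 0, Tendsto (fun t : ℝ => I (t • u) / t ^ 2) atTop atTop) :
    ∀ᶠ x in cocompact X, action Q I x < 0 := by
  have : ProperSpace X := FiniteDimensional.proper_real X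
  have hsphere := eventually_atTop_forall_sphere_action_smul_neg (Q := Q) hI hmono htop
  filter_upwards [tendsto_norm_cocompact_atTop.eventually hsphere,
    tendsto_norm_cocompact_atTop.eventually (eventually_gt_atTop (0 : ℝ))] with x hx hpos
  have hunit : ‖x‖⁻¹ • x ∈ Metric.sphere (0 : X) 1 := by
    rw [mem_sphere_zero_iff_norm, norm_smul, norm_inv, norm_norm, inv_mul_cancel₀ hpos.ne']
  simpa only [smul_inv_smul₀ hpos.ne'] using hx _ hunit

theorem exists_isMaxOn_action {V : Submodule ℝ X} [FiniteDimensional ℝ V] {a : X}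
    (hI : Continuous I) (hnonpos : ∀ v ∈ V, action Q I v ≤ 0)
    (hmono : ∀ u ≠ 0, MonotoneOn (fun t : ℝ => I (t • u) / t ^ 2) (Ioi 0))
    (htop : ∀ u ≠ 0, Tendsto (fun t : ℝ => I (t • u) / t ^ 2) atTop atTop) (ha : a ∉ V)
    (hpos : ∃ b ∈ halfSpace V a, 0 < action Q I b) :
    ∃ u ∈ halfSpace V a, IsMaxOn (action Q I) (halfSpace V a) u := by
  obtain ⟨ℓ, hℓ, hℓa⟩ := LinearMap.exists_extend_of_notMem (0 : V →ₗ[ℝ] ℝ) ha 1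
  have hV : V ≤ LinearMap.ker ℓ := fun v hv => by
    simpa using DFunLike.congr_fun hℓ ⟨v, hv⟩
  obtain ⟨b, hba, hb⟩ := hpos
  obtain ⟨hbF, hℓb⟩ := (mem_halfSpace_iff_pos hV hℓa).1 hba
  set F : Submodule ℝ X := V ⊔ Submodule.span ℝ {a}
  have : FiniteDimensional ℝ F := Submodule.finiteDimensional_sup V (Submodule.span ℝ {a})
  have hIF : Continuous fun x : F => I x := hI.comp continuous_subtype_val
  have hinf : ∀ᶠ x in cocompact F, action (Q.restrict F) (fun x => I x) x < 0 :=
    eventually_cocompact_action_neg hIF (fun u hu => hmono u (by simpa using hu))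
      (fun u hu => htop u (by simpa using hu))
  obtain ⟨u, hu, hmax⟩ := exists_pos_and_isMaxOn (f := fun x : F => action Q I x)
    (ℓ := fun x : F => ℓ x)
    (((continuous_bilinForm_self (Q.restrict F)).div_const 2).sub hIF)
    (ℓ ∘ₗ F.subtype).continuous_of_finiteDimensional
    (fun x hx => hnonpos x (mem_of_mem_sup_span_singleton_of_apply_eq_zero hV hℓa x.2 hx))
    (hinf.mono fun _ => le_of_lt) (x₀ := ⟨b, hbF⟩) hℓb hb
  refine ⟨u, (mem_halfSpace_iff_pos hV hℓa).2 ⟨u.2, hu⟩, fun w hw => ?_⟩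
  obtain ⟨hwF, hℓw⟩ := (mem_halfSpace_iff_pos hV hℓa).1 hw
  exact hmax (a := ⟨w, hwF⟩) hℓw

theorem exists_isMaxOn_action_of_pankovInequality {V : Submodule ℝ X} [FiniteDimensional ℝ V]
    {I' : X → X →L[ℝ] ℝ} {a : X} (hneg : ∀ v ∈ V, v ≠ 0 → Q v v < 0)
    (hderiv : ∀ u, HasFDerivAt I (I' u) u)
    (hzero : ∀ u ≠ 0, Tendsto (fun t : ℝ => I (t • u) / t ^ 2) (𝓝[>] 0) (𝓝 0))
    (htop : ∀ u ≠ 0, Tendsto (fun t : ℝ => I (t • u) / t ^ 2) atTop atTop)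
    (hI : PankovInequality I (fun u => (I' u).toLinearMap) V) (ha : a ∉ V)
    (hpos : ∃ b ∈ halfSpace V a, 0 < Q b b) :
    ∃ u ∈ halfSpace V a, IsMaxOn (action Q I) (halfSpace V a) u := by
  have hcont : Continuous I := continuous_iff_continuousAt.2 fun u => (hderiv u).continuousAt
  have ha0 : a ≠ 0 := fun h => ha (h ▸ V.zero_mem)
  have hI0 : I 0 = 0 :=
    apply_zero_eq_zero_of_tendsto_div_sq (u := a) (by fun_prop) (hzero a ha0)
  have hmono : ∀ u, MonotoneOn (fun t : ℝ => I (t • u) / t ^ 2) (Ioi 0) := fun u =>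
    monotoneOn_apply_smul_div_sq (fun x => (hderiv x).hasLineDerivAt u) (hI.two_mul_le hI0)
  have hnonpos : ∀ v ∈ V, action Q I v ≤ 0 := by
    intro v hv
    rcases eq_or_ne v 0 with rfl | hv0
    · simp [action, hI0]
    · have hIv := apply_nonneg_of_monotoneOn_div_sq (hmono v) (hzero v hv0)
      rw [action]
      linarith [hneg v hv hv0]
  obtain ⟨b, hb, hQb⟩ := hpos
  have hb0 : b ≠ 0 := by
    rintro rfl
    simp at hQb
  obtain ⟨t, ht, hJ⟩ := exists_pos_action_smul_pos hQb (hzero b hb0)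
  exact exists_isMaxOn_action hcont hnonpos (fun u _ => hmono u) htop ha
    ⟨t • b, smul_mem_halfSpace ht hb, hJ⟩

end Existence

section SpectralForm

variable {X : Type*} [NormedAddCommGroup X] [InnerProductSpace ℝ X] {lam : ℕ → ℝ} {ζ : ℕ → X}
  {l : ℝ} {n : ℕ} {u : X}

theorem isLinearMap_coefH (lam : ℕ → ℝ) (ζ : ℕ → X) (k : ℕ) :
    IsLinearMap ℝ fun u => coefH lam ζ u k where
  map_add u v := by simp only [coefH, inner_add_left, add_div]
  map_smul c u := by simp only [coefH, real_inner_smul_left, mul_div_assoc, smul_eq_mul]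

theorem orthonormal_inv_sqrt_smul (hlam : ∀ k, -1 < lam k)
    (hON : ∀ j k, ⟪ζ j, ζ k⟫_ℝ = if j = k then 1 + lam k else 0) :
    Orthonormal ℝ fun k => (√(1 + lam k))⁻¹ • ζ k := by
  rw [orthonormal_iff_ite]
  intro j k
  rw [real_inner_smul_left, real_inner_smul_right, hON]
  split_ifs with hjk
  · subst hjk
    have hpos : 0 < 1 + lam j := by linarith [hlam j]
    rw [← mul_assoc, ← mul_inv, Real.mul_self_sqrt hpos.le, inv_mul_cancel₀ hpos.ne']
  · simp

theorem summable_one_add_mul_coefH_sq (hlam : ∀ k, -1 < lam k)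
    (hON : ∀ j k, ⟪ζ j, ζ k⟫_ℝ = if j = k then 1 + lam k else 0) (u : X) :
    Summable fun k => (1 + lam k) * coefH lam ζ u k ^ 2 := by
  refine ((orthonormal_inv_sqrt_smul hlam hON).inner_products_summable u).congr fun k => ?_
  have hpos : 0 < 1 + lam k := by linarith [hlam k]
  rw [real_inner_smul_left, Real.norm_eq_abs, sq_abs, mul_pow, inv_pow, Real.sq_sqrt hpos.le,
    coefH, real_inner_comm]
  field_simp

theorem summable_qForm (hlam : ∀ k, -1 < lam k)
    (hON : ∀ j k, ⟪ζ j, ζ k⟫_ℝ = if j = k then 1 + lam k else 0) (hl : -1 ≤ l)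
    (hlarge : ∀ᶠ k in atTop, l ≤ lam k) (u v : X) :
    Summable fun k => (lam k - l) * (coefH lam ζ u k * coefH lam ζ v k) := by
  refine ((summable_one_add_mul_coefH_sq hlam hON u).add
    (summable_one_add_mul_coefH_sq hlam hON v)).of_norm_bounded_eventually_nat ?_
  filter_upwards [hlarge] with k hk
  set x := coefH lam ζ u k
  set y := coefH lam ζ v k
  have hxy : |x * y| ≤ x ^ 2 + y ^ 2 := by
    rw [abs_le]
    constructor <;> nlinarith [sq_nonneg (x + y), sq_nonneg (x - y)]
  calc ‖(lam k - l) * (x * y)‖ = (lam k - l) * |x * y| := by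
        rw [Real.norm_eq_abs, abs_mul, abs_of_nonneg (sub_nonneg.2 hk)]
    _ ≤ (1 + lam k) * (x ^ 2 + y ^ 2) :=
        mul_le_mul (by linarith) hxy (abs_nonneg _) (by linarith [hlam k])
    _ = (1 + lam k) * x ^ 2 + (1 + lam k) * y ^ 2 := mul_add _ _ _

theorem exists_bilinForm_eq_qForm
    (hs : ∀ u v : X, Summable fun k => (lam k - l) * (coefH lam ζ u k * coefH lam ζ v k)) :
    ∃ Q : LinearMap.BilinForm ℝ X, Q.IsSymm ∧ ∀ u v, Q u v = qForm lam ζ l u v := by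
  have hsymm : ∀ u v, qForm lam ζ l u v = qForm lam ζ l v u := fun u v =>
    tsum_congr fun k => by ring
  have hadd : ∀ u v w, qForm lam ζ l (u + v) w = qForm lam ζ l u w + qForm lam ζ l v w := by
    intro u v w
    simp only [qForm]
    rw [← (hs u w).tsum_add (hs v w)]
    exact tsum_congr fun k => by rw [(isLinearMap_coefH lam ζ k).map_add]; ring
  have hsmul : ∀ (c : ℝ) u w, qForm lam ζ l (c • u) w = c • qForm lam ζ l u w := by
    intro c u w
    simp only [qForm, smul_eq_mul]
    rw [← tsum_mul_left]
    exact tsum_congr fun k => by rw [(isLinearMap_coefH lam ζ k).map_smul, smul_eq_mul]; ring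
  exact ⟨LinearMap.mk₂ ℝ (qForm lam ζ l) hadd hsmul
    (fun w u v => by rw [hsymm, hadd, hsymm u, hsymm v])
    (fun c w u => by rw [hsymm, hsmul, hsymm u]), ⟨hsymm⟩, fun _ _ => rfl⟩

theorem exists_coefH_ne_zero (hlam : ∀ k, -1 < lam k)
    (hdense : (Submodule.span ℝ (Set.range ζ)).topologicalClosure = ⊤) (hu : u ≠ 0) :
    ∃ k, coefH lam ζ u k ≠ 0 := by
  contrapose! hu
  have hinner : ∀ k, ⟪u, ζ k⟫_ℝ = 0 := fun k =>
    (div_eq_zero_iff.1 (hu k)).resolve_right (by linarith [hlam k])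
  have hspan : Submodule.span ℝ (Set.range ζ) ≤ LinearMap.ker (innerₛₗ ℝ u) :=
    Submodule.span_le.2 (range_subset_iff.2 hinner)
  exact (Submodule.dense_iff_topologicalClosure_eq_top.2 hdense).eq_zero_of_inner_left (𝕜 := ℝ)
    fun v hv => hspan hv

theorem coefH_eq_zero_of_mem_Esub
    (hON : ∀ j k, ⟪ζ j, ζ k⟫_ℝ = if j = k then 1 + lam k else 0) (hu : u ∈ Esub ζ n) {k : ℕ}
    (hk : n < k) : coefH lam ζ u k = 0 := by
  have hspan : Esub ζ n ≤ LinearMap.ker ((isLinearMap_coefH lam ζ k).mk' _) := by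
    refine Submodule.span_le.2 ?_
    rintro _ ⟨j, hj, rfl⟩
    have hjk : j ≠ k := ne_of_lt (lt_of_le_of_lt hj hk)
    simp [coefH, hON, hjk]
  exact hspan hu

theorem coefH_eq_zero_of_mem_orthogonal (hu : u ∈ (Esub ζ n)ᗮ) {k : ℕ} (hk : k ≤ n) :
    coefH lam ζ u k = 0 := by
  have hinner : ⟪ζ k, u⟫_ℝ = 0 := hu _ (Submodule.subset_span ⟨k, hk, rfl⟩)
  rw [coefH, real_inner_comm, hinner, zero_div]

theorem qForm_self_pos
    (hs : Summable fun k => (lam k - l) * (coefH lam ζ u k * coefH lam ζ u k))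
    (hsupp : ∀ k, coefH lam ζ u k ≠ 0 → l < lam k) (hne : ∃ k, coefH lam ζ u k ≠ 0) :
    0 < qForm lam ζ l u u := by
  have hterm : ∀ k, coefH lam ζ u k ≠ 0 →
      0 < (lam k - l) * (coefH lam ζ u k * coefH lam ζ u k) := fun k hk =>
    mul_pos (sub_pos.2 (hsupp k hk)) (mul_self_pos.2 hk)
  obtain ⟨k, hk⟩ := hne
  refine hs.tsum_pos (fun j => ?_) k (hterm k hk)
  by_cases hj : coefH lam ζ u j = 0
  · simp [hj]
  · exact (hterm j hj).le

theorem qForm_self_neg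
    (hs : Summable fun k => (lam k - l) * (coefH lam ζ u k * coefH lam ζ u k))
    (hsupp : ∀ k, coefH lam ζ u k ≠ 0 → lam k < l) (hne : ∃ k, coefH lam ζ u k ≠ 0) :
    qForm lam ζ l u u < 0 := by
  have hterm : ∀ k, coefH lam ζ u k ≠ 0 →
      0 < -((lam k - l) * (coefH lam ζ u k * coefH lam ζ u k)) := fun k hk =>
    neg_pos.2 (mul_neg_of_neg_of_pos (sub_neg.2 (hsupp k hk)) (mul_self_pos.2 hk))
  obtain ⟨k, hk⟩ := hne
  rw [← neg_pos, qForm, ← tsum_neg]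
  refine hs.neg.tsum_pos (fun j => ?_) k (hterm k hk)
  by_cases hj : coefH lam ζ u j = 0
  · simp [hj]
  · exact (hterm j hj).le

instance finiteDimensional_Esub (ζ : ℕ → X) (n : ℕ) : FiniteDimensional ℝ (Esub ζ n) :=
  FiniteDimensional.span_of_finite ℝ ((Set.finite_le_nat n).image ζ)

theorem qForm_self_neg_of_mem_Esub (hlam : ∀ k, -1 < lam k)
    (hON : ∀ j k, ⟪ζ j, ζ k⟫_ℝ = if j = k then 1 + lam k else 0)
    (hdense : (Submodule.span ℝ (Set.range ζ)).topologicalClosure = ⊤)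
    (hs : Summable fun k => (lam k - l) * (coefH lam ζ u k * coefH lam ζ u k))
    (hbelow : ∀ k ≤ n, lam k < l) (hu : u ∈ Esub ζ n) (hu0 : u ≠ 0) : qForm lam ζ l u u < 0 := by
  refine qForm_self_neg hs (fun k hk => hbelow k ?_) (exists_coefH_ne_zero hlam hdense hu0)
  exact not_lt.1 fun h => hk (coefH_eq_zero_of_mem_Esub hON hu h)

theorem exists_mem_halfSpace_qForm_self_pos (hlam : ∀ k, -1 < lam k)
    (hdense : (Submodule.span ℝ (Set.range ζ)).topologicalClosure = ⊤)
    (hs : ∀ u : X, Summable fun k => (lam k - l) * (coefH lam ζ u k * coefH lam ζ u k))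
    (habove : ∀ k, n < k → l < lam k) (hu : u ∉ Esub ζ n) :
    ∃ b ∈ halfSpace (Esub ζ n) u, 0 < qForm lam ζ l b b := by
  obtain ⟨b, hb, hbu⟩ := exists_mem_orthogonal_mem_halfSpace (Esub ζ n) u
  have hb0 : b ≠ 0 := fun h => notMem_of_mem_halfSpace hu hbu (h ▸ zero_mem _)
  refine ⟨b, hbu, qForm_self_pos (hs b) (fun k hk => habove k ?_)
    (exists_coefH_ne_zero hlam hdense hb0)⟩
  exact not_le.1 fun h => hk (coefH_eq_zero_of_mem_orthogonal hb h)

end SpectralForm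

theorem exists_unique_maximizer_on_half_space_general {E : Type*} [NormedAddCommGroup E]
    [InnerProductSpace ℝ E] (lam : ℕ → ℝ) (ζ : ℕ → E) (hlam : ∀ k, -1 < lam k)
    (hON : ∀ j k, ⟪ζ j, ζ k⟫_ℝ = if j = k then 1 + lam k else 0)
    (hdense : (Submodule.span ℝ (Set.range ζ)).topologicalClosure = ⊤)
    (I : E → ℝ) (I' : E → E →L[ℝ] ℝ) (hIderiv : ∀ u, HasFDerivAt I (I' u) u)
    (hI3zero : ∀ u : E, u ≠ 0 → Tendsto (fun t : ℝ => I (t • u) / t ^ 2) (𝓝[>] 0) (𝓝 0))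
    (hI3top : ∀ u : E, u ≠ 0 → Tendsto (fun t : ℝ => I (t • u) / t ^ 2) atTop atTop)
    (n : ℕ)
    (hI4 : ∀ u : E, u ≠ 0 → ∀ v ∈ Esub ζ n, ∀ s : ℝ, -1 ≤ s →
      I u - I ((1 + s) • u + v) + I' u ((s * (s / 2 + 1)) • u + (1 + s) • v) ≤ 0)
    (hI4strict : ∀ u : E, u ≠ 0 → ∀ s : ℝ, -1 ≤ s → s ≠ 0 →
      I u - I ((1 + s) • u) + I' u ((s * (s / 2 + 1)) • u) < 0)
    (lambda : ℝ) (hbelow : ∀ k ≤ n, lam k < lambda) (habove : ∀ k, n < k → lambda < lam k) :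
    (∀ ut : E, ut ∉ Esub ζ n →
      (∃! u : E, u ∈ FsubPlus ζ n ut ∧
        ∀ w ∈ FsubPlus ζ n ut, Jfun lam ζ I lambda w ≤ Jfun lam ζ I lambda u) ∧
      (∀ u : E, u ∈ FsubPlus ζ n ut →
        (∀ w ∈ FsubPlus ζ n ut, Jfun lam ζ I lambda w ≤ Jfun lam ζ I lambda u) →
        u ∈ NehariPankov lam ζ I' n lambda)) ∧
    sInf (Jfun lam ζ I lambda '' NehariPankov lam ζ I' n lambda) =
      sInf ((fun ut => sSup (Jfun lam ζ I lambda '' FsubPlus ζ n ut)) ''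
        {ut : E | ut ∉ Esub ζ n}) := by
  have hs := summable_qForm hlam hON ((hlam n).trans (hbelow n le_rfl)).le
    ((eventually_gt_atTop n).mono fun k hk => (habove k hk).le)
  obtain ⟨Q, hQ, hQq⟩ := exists_bilinForm_eq_qForm hs
  have hneg : ∀ v ∈ Esub ζ n, v ≠ 0 → Q v v < 0 := fun v hv hv0 =>
    hQq v v ▸ qForm_self_neg_of_mem_Esub hlam hON hdense (hs v v) hbelow hv hv0
  have hpos : ∀ a ∉ Esub ζ n, ∃ b ∈ halfSpace (Esub ζ n) a, 0 < Q b b := fun a ha => by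
    simpa only [hQq] using
      exists_mem_halfSpace_qForm_self_pos hlam hdense (fun u => hs u u) habove ha
  have hI : PankovInequality I (fun u => (I' u).toLinearMap) (Esub ζ n) := ⟨hI4, hI4strict⟩
  have hderiv := fun x w => (hIderiv x).hasLineDerivAt w
  have hex := fun a ha =>
    exists_isMaxOn_action_of_pankovInequality hneg hIderiv hI3zero hI3top hI ha (hpos a ha)
  have hJ : Jfun lam ζ I lambda = action Q I := funext fun u => by rw [Jfun, action, hQq]
  have hNP : NehariPankov lam ζ I' n lambda =
      nehariPankovSet Q (fun u => (I' u).toLinearMap) (Esub ζ n) := by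
    simp only [NehariPankov, nehariPankovSet, Jderiv, Fsub, hQq, ContinuousLinearMap.coe_coe]
  have hF : FsubPlus ζ n = halfSpace (Esub ζ n) := rfl
  simp only [← isMaxOn_iff, hJ, hNP, hF]
  exact ⟨fun a ha => ⟨existsUnique_isMaxOn_action hQ hneg hderiv hI ha (hex a ha),
      fun u => mem_nehariPankovSet_of_isMaxOn hQ hderiv ha⟩,
    congrArg sInf (image_action_nehariPankovSet hQ hneg hderiv hI hex)⟩


/-- On every half-space `F_n(ũ)⁺` the functional `J_λ` has a unique
maximizer, which lies in `NP_λ`; consequently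
`inf_{NP_λ} J_λ = inf_{ũ ∉ E_n} sup_{F_n(ũ)⁺} J_λ`. -/
theorem exists_unique_maximizer_on_half_space {E : Type*} [NormedAddCommGroup E]
    [InnerProductSpace ℝ E] [CompleteSpace E]
    (lam : ℕ → ℝ) (ζ : ℕ → E)
    (hlam_mono : Monotone lam) (hlam_nonneg : ∀ k, 0 ≤ lam k)
    (hlam_top : Tendsto lam atTop atTop)
    (hON : ∀ j k, ⟪ζ j, ζ k⟫_ℝ = if j = k then 1 + lam k else 0)
    (hdense : (Submodule.span ℝ (Set.range ζ)).topologicalClosure = ⊤)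
    (I : E → ℝ) (I' : E → E →L[ℝ] ℝ)
    (hIderiv : ∀ u, HasFDerivAt I (I' u) u) (hIderiv_cont : Continuous I')
    (hI1 : ∀ (u : ℕ → E) (a : E),
      (∀ φ : E →L[ℝ] ℝ, Tendsto (fun j => φ (u j)) atTop (𝓝 (φ a))) →
      Tendsto (fun j => I (u j)) atTop (𝓝 (I a)))
    (hI2 : I 0 = 0 ∧ ∀ u : E, u ≠ 0 → 0 < I u)
    (hI3mono : ∀ u : E, u ≠ 0 → MonotoneOn (fun t : ℝ => I (t • u) / t ^ 2) (Ioi 0))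
    (hI3zero : ∀ u : E, u ≠ 0 → Tendsto (fun t : ℝ => I (t • u) / t ^ 2) (𝓝[>] 0) (𝓝 0))
    (hI3top : ∀ u : E, u ≠ 0 → Tendsto (fun t : ℝ => I (t • u) / t ^ 2) atTop atTop)
    (hI4 : ∀ u : E, u ≠ 0 → ∀ v : E, ∀ s : ℝ, -1 ≤ s →
      I u - I ((1 + s) • u + v) + I' u ((s * (s / 2 + 1)) • u + (1 + s) • v) ≤ 0)
    (hI4strict : ∀ u : E, u ≠ 0 → ∀ s : ℝ, -1 ≤ s → s ≠ 0 →
      I u - I ((1 + s) • u) + I' u ((s * (s / 2 + 1)) • u) < 0)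
    (n : ℕ)
    (lambda : ℝ) (hlambda : lambda ∈ Ioo (lam n) (lam (n + 1))) :
    (∀ ut : E, ut ∉ Esub ζ n →
      (∃! u : E, u ∈ FsubPlus ζ n ut ∧
        ∀ w ∈ FsubPlus ζ n ut, Jfun lam ζ I lambda w ≤ Jfun lam ζ I lambda u) ∧
      (∀ u : E, u ∈ FsubPlus ζ n ut →
        (∀ w ∈ FsubPlus ζ n ut, Jfun lam ζ I lambda w ≤ Jfun lam ζ I lambda u) →
        u ∈ NehariPankov lam ζ I' n lambda)) ∧
    sInf (Jfun lam ζ I lambda '' NehariPankov lam ζ I' n lambda) =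
      sInf ((fun ut => sSup (Jfun lam ζ I lambda '' FsubPlus ζ n ut)) ''
        {ut : E | ut ∉ Esub ζ n}) := by
  exact exists_unique_maximizer_on_half_space_general lam ζ
    (fun k => by linarith [hlam_nonneg k]) hON hdense I I' hIderiv hI3zero hI3top n
    (fun u hu v _ => hI4 u hu v) hI4strict lambda
    (fun _ hk => (hlam_mono hk).trans_lt hlambda.1)
    (fun _ hk => hlambda.2.trans_le (hlam_mono hk))
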